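/- arXiv:1512.08609 — 4 statements merged into one kernel-verified Lean document; each statement's English description precedes it below -/
import Mathlib

section
/- Let λ > 0, β ≥ 0, let S and R be Borel probability measures on [0,∞) with finite first moments μ₁ and γ₁ and Laplace transforms S̃, R̃, and define h(z) = λ + β − λz − β R̃(λ − λz) and δ(z) = S̃(h(z)) for z ∈ [0,1]. If the stability condition λμ₁(1 + βγ₁) < 1 holds, then δ(u) > u for every u ∈ [0,1). -/
open MeasureTheory

/-- Laplace transform of a (Borel) measure on `ℝ`. -/
noncomputable def lapl (μ : Measure ℝ) (θ : ℝ) : ℝ :=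
  ∫ x, Real.exp (-θ * x) ∂μ

theorem lapl_integrable_aux (μ : Measure ℝ) [IsProbabilityMeasure μ] (h0 : ∀ᵐ x ∂μ, 0 ≤ x)
    (θ : ℝ) (hθ : 0 ≤ θ) : Integrable (fun x => Real.exp (-θ * x)) μ := by
  refine Integrable.of_bound (C := 1) (by fun_prop) ?_
  filter_upwards [h0] with x hx
  rw [Real.norm_eq_abs, abs_of_pos (Real.exp_pos _), Real.exp_le_one_iff]
  nlinarith [mul_nonneg hθ hx]

theorem lapl_le_one_aux (μ : Measure ℝ) [IsProbabilityMeasure μ] (h0 : ∀ᵐ x ∂μ, 0 ≤ x)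
    (θ : ℝ) (hθ : 0 ≤ θ) : lapl μ θ ≤ 1 := by
  have h1 : lapl μ θ ≤ ∫ _, (1 : ℝ) ∂μ := by
    refine integral_mono_ae (lapl_integrable_aux μ h0 θ hθ) (integrable_const _) ?_
    filter_upwards [h0] with x hx
    rw [Real.exp_le_one_iff]
    nlinarith [mul_nonneg hθ hx]
  simpa using h1

theorem lapl_ge_aux (μ : Measure ℝ) [IsProbabilityMeasure μ] (h0 : ∀ᵐ x ∂μ, 0 ≤ x)
    (hint : Integrable (fun x => x) μ)
    (θ : ℝ) (hθ : 0 ≤ θ) : 1 - θ * ∫ x, x ∂μ ≤ lapl μ θ := by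
  have h1 : ∫ x, (1 - θ * x) ∂μ ≤ lapl μ θ := by
    refine integral_mono_ae ((integrable_const _).sub (hint.const_mul θ))
      (lapl_integrable_aux μ h0 θ hθ) ?_
    filter_upwards with x
    have := Real.add_one_le_exp (-θ * x)
    linarith
  rw [integral_sub (integrable_const _) (hint.const_mul θ), integral_const_mul] at h1
  simpa using h1

theorem ae_nonneg_aux (μ : Measure ℝ) (h0 : μ (Set.Iio 0) = 0) : ∀ᵐ x ∂μ, 0 ≤ x := by
  rw [ae_iff]
  convert h0 using 2
  ext x
  simp

/-- under the stability condition `λμ₁(1 + βγ₁) < 1`, the generating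
function `δ(z) = S̃(h(z))` satisfies `δ(u) > u` for every `u ∈ [0,1)`. -/
theorem delta_above_diagonal (lam beta : ℝ) (hlam : 0 < lam) (hbeta : 0 ≤ beta)
    (S R : Measure ℝ) [IsProbabilityMeasure S] [IsProbabilityMeasure R]
    (hS0 : S (Set.Iio 0) = 0) (hR0 : R (Set.Iio 0) = 0)
    (hintS : Integrable (fun x => x) S) (hintR : Integrable (fun x => x) R)
    (mu1 gamma1 : ℝ) (hmu1 : mu1 = ∫ x, x ∂S) (hgamma1 : gamma1 = ∫ x, x ∂ R)
    (h δ : ℝ → ℝ)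
    (hh : ∀ z, h z = lam + beta - lam * z - beta * lapl R (lam - lam * z))
    (hδ : ∀ z, δ z = lapl S (h z))
    (hstab : lam * mu1 * (1 + beta * gamma1) < 1) :
    ∀ u ∈ Set.Ico (0 : ℝ) 1, u < δ u := by
  rintro u ⟨hu0, hu1⟩
  have hS := ae_nonneg_aux S hS0
  have hR := ae_nonneg_aux R hR0
  have hmu : 0 ≤ mu1 := hmu1 ▸ integral_nonneg_of_ae hS
  have ht : 0 ≤ lam - lam * u := by nlinarith
  have hL1 := lapl_le_one_aux R hR _ ht
  have hL2 := lapl_ge_aux R hR hintR _ ht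
  rw [← hgamma1] at hL2
  have hh0 : 0 ≤ h u := by
    rw [hh]
    nlinarith [mul_nonneg hbeta (sub_nonneg.2 hL1)]
  have hh1 : h u ≤ lam * (1 - u) * (1 + beta * gamma1) := by
    rw [hh]
    nlinarith [mul_le_mul_of_nonneg_left hL2 hbeta]
  have hd := lapl_ge_aux S hS hintS _ hh0
  rw [← hmu1] at hd
  rw [hδ]
  have h3 := mul_le_mul_of_nonneg_right hh1 hmu
  have h4 := mul_lt_mul_of_pos_right hstab (sub_pos.2 hu1)
  nlinarith
end

section
/- Let λ, α > 0, ν > 0, β₁, β₂ ≥ 0, and for i ∈ {1,2} let Sᵢ, Rᵢ be Borel probability measures on [0,∞) with finite first moments μ_{i,1}, γ_{i,1} and Laplace transforms S̃ᵢ, R̃ᵢ; set hᵢ(z) = λ + βᵢ − λz − βᵢR̃ᵢ(λ − λz), δᵢ(z) = S̃ᵢ(hᵢ(z)), and g(u) = [λ(1 − δ₁(u)) + α(1 − δ₂(u))]/(ν(δ₁(u) − u)). Assume λμ_{1,1}(1 + β₁γ_{1,1}) < 1. Then for every z ∈ [0,1] the integral ∫_z^1 g(u) du is finite, the function φ(z)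 = exp(−∫_z^1 g(u) du) satisfies 0 < φ(z) ≤ 1 on [0,1], φ is continuous and nondecreasing on [0,1], and φ(1) = 1. -/
open MeasureTheory

lemma lapl_bounds (m : Measure ℝ) [IsProbabilityMeasure m] (h0 : m (Set.Iio 0) = 0)
    (hi : Integrable (fun x => x) m) (t : ℝ) (ht : 0 ≤ t) :
    lapl m t ≤ 1 ∧ 1 - t * (∫ x, x ∂m) ≤ lapl m t := by
  have hpos : ∀ᵐ x ∂m, 0 ≤ x := by
    rw [ae_iff]
    simpa [Set.Iio] using h0
  have hint : Integrable (fun x => Real.exp (-t * x)) m := by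
    refine Integrable.of_bound (C := 1) (by fun_prop) ?_
    filter_upwards [hpos] with x hx
    rw [Real.norm_eq_abs, abs_of_pos (Real.exp_pos _)]
    exact Real.exp_le_one_iff.2 (by nlinarith)
  unfold lapl
  constructor
  · have := integral_mono_ae hint (integrable_const (1 : ℝ)) (by
      filter_upwards [hpos] with x hx
      exact Real.exp_le_one_iff.2 (by nlinarith))
    simpa using this
  · have := integral_mono_ae ((integrable_const (1 : ℝ)).sub (hi.const_mul t)) hint (by
      filter_upwards [hpos] with x hx
      have := Real.add_one_le_exp (-t * x)
      simp only [Pi.sub_apply]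
      linarith)
    simp only [Pi.sub_apply] at this
    rw [integral_sub (integrable_const _) (hi.const_mul t), integral_const_mul] at this
    simpa using this

lemma lapl_measurable (m : Measure ℝ) [IsProbabilityMeasure m] : Measurable (lapl m) := by
  have h : StronglyMeasurable (Function.uncurry fun t x : ℝ => Real.exp (-t * x)) := by
    apply Continuous.stronglyMeasurable
    unfold Function.uncurry
    fun_prop
  exact (h.integral_prod_right (ν := m)).measurable

lemma delta_bounds (lam beta : ℝ) (hlam : 0 < lam) (hbeta : 0 ≤ beta) (S R : Measure ℝ)
    [IsProbabilityMeasure S] [IsProbabilityMeasure R]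
    (hS : S (Set.Iio 0) = 0) (hR : R (Set.Iio 0) = 0)
    (hiS : Integrable (fun x => x) S) (hiR : Integrable (fun x => x) R) (u : ℝ) (hu : u ≤ 1) :
    lapl S (lam + beta - lam * u - beta * lapl R (lam - lam * u)) ≤ 1 ∧
    1 - lapl S (lam + beta - lam * u - beta * lapl R (lam - lam * u)) ≤
      lam * (∫ x, x ∂S) * (1 + beta * ∫ x, x ∂ R) * (1 - u) := by
  have hmS : 0 ≤ ∫ x, x ∂S := by
    apply integral_nonneg_of_ae
    change ∀ᵐ x ∂S, 0 ≤ x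
    rw [ae_iff]
    simpa [Set.Iio] using hS
  obtain ⟨a, b⟩ := lapl_bounds R hR hiR (lam - lam * u) (by nlinarith)
  set r := lapl R (lam - lam * u)
  have k1 : beta * (1 - r) ≤ beta * ((lam - lam * u) * ∫ x, x ∂ R) :=
    mul_le_mul_of_nonneg_left (by linarith) hbeta
  have k0 : 0 ≤ beta * (1 - r) := mul_nonneg hbeta (by linarith)
  have k2 : 0 ≤ lam * (1 - u) := mul_nonneg hlam.le (by linarith)
  obtain ⟨c, d⟩ := lapl_bounds S hS hiS (lam + beta - lam * u - beta * r) (by linarith)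
  refine ⟨c, ?_⟩
  have : (lam + beta - lam * u - beta * r) * (∫ x, x ∂S) ≤
      (lam * (1 - u) + beta * ((lam - lam * u) * ∫ x, x ∂ R)) * ∫ x, x ∂S :=
    mul_le_mul_of_nonneg_right (by linarith) hmS
  linarith

/-- under the stability condition `λμ_{1,1}(1 + β₁γ_{1,1}) < 1`, for
every `z ∈ [0,1]` the integral `∫_z^1 g(u) du` is finite, and
`φ(z) = exp(−∫_z^1 g(u) du)` satisfies `0 < φ(z) ≤ 1` on `[0,1]`, is continuous and
nondecreasing on `[0,1]`, and `φ(1) = 1`. -/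
theorem phi_properties (lam alpha nu beta1 beta2 : ℝ)
    (hlam : 0 < lam) (halpha : 0 < alpha) (hnu : 0 < nu)
    (hbeta1 : 0 ≤ beta1) (hbeta2 : 0 ≤ beta2)
    (S1 R1 S2 R2 : Measure ℝ)
    [IsProbabilityMeasure S1] [IsProbabilityMeasure R1]
    [IsProbabilityMeasure S2] [IsProbabilityMeasure R2]
    (hS1 : S1 (Set.Iio 0) = 0) (hR1 : R1 (Set.Iio 0) = 0)
    (hS2 : S2 (Set.Iio 0) = 0) (hR2 : R2 (Set.Iio 0) = 0)
    (hiS1 : Integrable (fun x => x) S1) (hiR1 : Integrable (fun x => x) R1)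
    (hiS2 : Integrable (fun x => x) S2) (hiR2 : Integrable (fun x => x) R2)
    (mu11 gamma11 mu21 gamma21 : ℝ)
    (hmu11 : mu11 = ∫ x, x ∂S1) (hgamma11 : gamma11 = ∫ x, x ∂ R1)
    (hmu21 : mu21 = ∫ x, x ∂S2) (hgamma21 : gamma21 = ∫ x, x ∂ R2)
    (h1 h2 δ1 δ2 g φ : ℝ → ℝ)
    (hh1 : ∀ z, h1 z = lam + beta1 - lam * z - beta1 * lapl R1 (lam - lam * z))
    (hh2 : ∀ z, h2 z = lam + beta2 - lam * z - beta2 * lapl R2 (lam - lam * z))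
    (hδ1 : ∀ z, δ1 z = lapl S1 (h1 z)) (hδ2 : ∀ z, δ2 z = lapl S2 (h2 z))
    (hg : ∀ u, g u = (lam * (1 - δ1 u) + alpha * (1 - δ2 u)) / (nu * (δ1 u - u)))
    (hφ : ∀ z, φ z = Real.exp (-(∫ u in z..1, g u)))
    (hstab : lam * mu11 * (1 + beta1 * gamma11) < 1) :
    (∀ z ∈ Set.Icc (0 : ℝ) 1, IntervalIntegrable g volume z 1) ∧
      (∀ z ∈ Set.Icc (0 : ℝ) 1, 0 < φ z ∧ φ z ≤ 1) ∧
      ContinuousOn φ (Set.Icc 0 1) ∧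
      MonotoneOn φ (Set.Icc 0 1) ∧
      φ 1 = 1 := by
  have B1 : ∀ u ≤ 1, δ1 u ≤ 1 ∧ 1 - δ1 u ≤ lam * mu11 * (1 + beta1 * gamma11) * (1 - u) := by
    intro u hu
    rw [hδ1, hh1, hmu11, hgamma11]
    exact delta_bounds lam beta1 hlam hbeta1 S1 R1 hS1 hR1 hiS1 hiR1 u hu
  have B2 : ∀ u ≤ 1, δ2 u ≤ 1 ∧ 1 - δ2 u ≤ lam * mu21 * (1 + beta2 * gamma21) * (1 - u) := by
    intro u hu
    rw [hδ2, hh2, hmu21, hgamma21]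
    exact delta_bounds lam beta2 hlam hbeta2 S2 R2 hS2 hR2 hiS2 hiR2 u hu
  clear hmu11 hmu21 hgamma11 hgamma21
  set ρ := lam * mu11 * (1 + beta1 * gamma11)
  set ρ2 := lam * mu21 * (1 + beta2 * gamma21)
  have hgm : Measurable g := by
    have m1 : Measurable δ1 := by
      rw [funext hδ1]
      refine (lapl_measurable S1).comp ?_
      rw [funext hh1]
      have := (lapl_measurable R1).comp (f := fun z : ℝ => lam - lam * z) (by fun_prop)
      exact (by fun_prop : Measurable fun z : ℝ => lam + beta1 - lam * z).sub (this.const_mul _)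
    have m2 : Measurable δ2 := by
      rw [funext hδ2]
      refine (lapl_measurable S2).comp ?_
      rw [funext hh2]
      have := (lapl_measurable R2).comp (f := fun z : ℝ => lam - lam * z) (by fun_prop)
      exact (by fun_prop : Measurable fun z : ℝ => lam + beta2 - lam * z).sub (this.const_mul _)
    rw [funext hg]
    fun_prop
  have hnum : ∀ u ≤ 1, 0 ≤ lam * (1 - δ1 u) + alpha * (1 - δ2 u) := fun u hu => by
    have := mul_nonneg hlam.le (sub_nonneg.2 (B1 u hu).1)
    have := mul_nonneg halpha.le (sub_nonneg.2 (B2 u hu).1)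
    linarith
  have hden : ∀ u ≤ 1, nu * ((1 - ρ) * (1 - u)) ≤ nu * (δ1 u - u) := fun u hu =>
    mul_le_mul_of_nonneg_left (by linarith [(B1 u hu).2]) hnu.le
  have hrho : 0 < 1 - ρ := by linarith
  have hg0 : ∀ u ≤ 1, 0 ≤ g u := fun u hu => by
    rw [hg]
    refine div_nonneg (hnum u hu) (le_trans ?_ (hden u hu))
    exact mul_nonneg hnu.le (mul_nonneg hrho.le (by linarith))
  have hgC : ∀ u < 1, g u ≤ (lam * ρ + alpha * ρ2) / (nu * (1 - ρ)) := fun u hu => by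
    have hu' : 0 < 1 - u := by linarith
    have hp : 0 < nu * ((1 - ρ) * (1 - u)) := by positivity
    rw [hg]
    calc _ ≤ (lam * (1 - δ1 u) + alpha * (1 - δ2 u)) / (nu * ((1 - ρ) * (1 - u))) :=
          div_le_div_of_nonneg_left (hnum u hu.le) hp (hden u hu.le)
      _ ≤ (lam * (ρ * (1 - u)) + alpha * (ρ2 * (1 - u))) / (nu * ((1 - ρ) * (1 - u))) := by
          have := mul_le_mul_of_nonneg_left (B1 u hu.le).2 hlam.le
          have := mul_le_mul_of_nonneg_left (B2 u hu.le).2 halpha.le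
          exact div_le_div_of_nonneg_right (by linarith) hp.le
      _ = _ := by
          field_simp
  have hI : IntervalIntegrable g volume 0 1 := by
    rw [intervalIntegrable_iff_integrableOn_Ioo_of_le zero_le_one]
    refine Measure.integrableOn_of_bounded (M := (lam * ρ + alpha * ρ2) / (nu * (1 - ρ)))
      (by simp) hgm.aestronglyMeasurable ?_
    refine (ae_restrict_iff' measurableSet_Ioo).2 (ae_of_all _ fun u hu => ?_)
    rw [Real.norm_eq_abs, abs_of_nonneg (hg0 u hu.2.le)]
    exact hgC u hu.2
  have hsub : ∀ a ∈ Set.Icc (0 : ℝ) 1, ∀ b ∈ Set.Icc (0 : ℝ) 1, IntervalIntegrable g volume a b := by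
    intro a ha b hb
    refine hI.mono_set (Set.uIcc_subset_uIcc ?_ ?_) <;> rwa [Set.uIcc_of_le zero_le_one]
  have h11 : (1 : ℝ) ∈ Set.Icc (0 : ℝ) 1 := by simp
  have hφ1 : φ 1 = 1 := by simp [hφ]
  have hmono : MonotoneOn φ (Set.Icc 0 1) := by
    intro a ha b hb hab
    rw [hφ, hφ, Real.exp_le_exp,
      ← intervalIntegral.integral_add_adjacent_intervals (hsub a ha b hb) (hsub b hb 1 h11)]
    have := intervalIntegral.integral_nonneg (μ := volume) hab
      (fun u hu => hg0 u (hu.2.trans hb.2))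
    linarith
  refine ⟨fun z hz => hsub z hz 1 h11, fun z hz => ⟨?_, ?_⟩, ?_, hmono, hφ1⟩
  · rw [hφ]; exact Real.exp_pos _
  · rw [← hφ1]; exact hmono hz h11 hz.2
  · rw [funext hφ]
    have := intervalIntegral.continuousOn_primitive_interval_left (f := g) (μ := volume)
      (a := 0) (b := 1) (by
        rw [Set.uIcc_of_le zero_le_one]
        exact (intervalIntegrable_iff_integrableOn_Icc_of_le zero_le_one).1 hI)
    rw [Set.uIcc_of_le zero_le_one] at this
    exact Real.continuous_exp.comp_continuousOn this.neg
end

section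
/- Let λ, α > 0, β₁, β₂ ≥ 0, and for i ∈ {1,2} let Sᵢ, Rᵢ be Borel probability measures on [0,∞) with finite first moments μ_{i,1}, γ_{i,1} and Laplace transforms S̃ᵢ, R̃ᵢ; set hᵢ(z) = λ + βᵢ − λz − βᵢR̃ᵢ(λ − λz) and δᵢ(z) = S̃ᵢ(hᵢ(z)). Assume λμ_{1,1}(1 + β₁γ_{1,1}) < 1. Then the ratio [λ(1 − z) + α(1 − δ₂(z))](1 − δ₁(z)) / ((δ₁(z) − z)h₁(z)) tends, as z → 1⁻, to μ_{1,1}(λ + αλμ_{2,1}(1 + β₂γ_{2,1}))/(1 − λμ_{1,1}(1 + β₁γ_{1,1})). -/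
open MeasureTheory

open Filter Topology in
lemma lapl_slope (μ : Measure ℝ) [IsProbabilityMeasure μ] (h0 : μ (Set.Iio 0) = 0)
    (hi : Integrable (fun x => x) μ) :
    Tendsto (fun θ : ℝ => (1 - lapl μ θ) / θ) (𝓝[>] 0) (𝓝 (∫ x, x ∂μ)) := by
  have hae : ∀ᵐ x ∂μ, 0 ≤ x := by
    rw [ae_iff]
    simpa [Set.Iio] using h0
  have key : Tendsto (fun θ : ℝ => ∫ x, (1 - Real.exp (-θ * x)) / θ ∂μ) (𝓝[>] 0)
      (𝓝 (∫ x, x ∂μ)) := by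
    apply tendsto_integral_filter_of_dominated_convergence (fun x => |x|)
    · exact Eventually.of_forall fun θ => by
        apply Continuous.aestronglyMeasurable
        fun_prop
    · filter_upwards [self_mem_nhdsWithin] with θ hθ
      have hθ' : 0 < θ := hθ
      filter_upwards [hae] with x hx
      have h1 : Real.exp (-θ * x) ≤ 1 := Real.exp_le_one_iff.2 (by nlinarith)
      have h2 := Real.add_one_le_exp (-θ * x)
      rw [Real.norm_of_nonneg (div_nonneg (by linarith) hθ'.le), abs_of_nonneg hx,
        div_le_iff₀ hθ']
      nlinarith
    · exact hi.abs
    · refine Eventually.of_forall fun x => ?_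
      have hd : HasDerivAt (fun θ : ℝ => 1 - Real.exp (-θ * x)) x 0 := by
        have h := (((hasDerivAt_id (0:ℝ)).neg.mul_const x).exp).const_sub 1
        simpa using h
      have h := hd.tendsto_slope_zero_right
      refine h.congr fun θ => ?_
      simp [div_eq_inv_mul]
  refine key.congr' ?_
  filter_upwards [self_mem_nhdsWithin] with θ hθ
  have hθ' : 0 < θ := hθ
  have hint : Integrable (fun x => Real.exp (-θ * x)) μ := by
    refine Integrable.mono' (integrable_const (1:ℝ)) ?_ ?_
    · apply Continuous.aestronglyMeasurable
      fun_prop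
    · filter_upwards [hae] with x hx
      rw [Real.norm_of_nonneg (Real.exp_pos _).le]
      exact Real.exp_le_one_iff.2 (by nlinarith)
  rw [integral_div, integral_sub (integrable_const _) hint]
  simp [lapl]

open Filter Topology in
lemma delta_limits (lam beta : ℝ) (hlam : 0 < lam) (hbeta : 0 ≤ beta)
    (S R : Measure ℝ) [IsProbabilityMeasure S] [IsProbabilityMeasure R]
    (hS : S (Set.Iio 0) = 0) (hR : R (Set.Iio 0) = 0)
    (hiS : Integrable (fun x => x) S) (hiR : Integrable (fun x => x) R)
    (h δ : ℝ → ℝ)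
    (hh : ∀ z, h z = lam + beta - lam * z - beta * lapl R (lam - lam * z))
    (hδ : ∀ z, δ z = lapl S (h z)) :
    (∀ᶠ z in 𝓝[<] (1:ℝ), 0 < h z) ∧
    Tendsto (fun z => (1 - δ z) / h z) (𝓝[<] 1) (𝓝 (∫ x, x ∂S)) ∧
    Tendsto (fun z => (1 - δ z) / (1 - z)) (𝓝[<] 1)
      (𝓝 (lam * (∫ x, x ∂S) * (1 + beta * ∫ x, x ∂ R))) := by
  have hγ : 0 ≤ ∫ x, x ∂ R := by
    apply integral_nonneg_of_ae
    rw [EventuallyLE, ae_iff]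
    simpa [Set.Iio] using hR
  have hz0 : Tendsto (fun z : ℝ => 1 - z) (𝓝[<] 1) (𝓝 0) := by
    have : Continuous fun z : ℝ => 1 - z := by fun_prop
    simpa using (this.tendsto 1).mono_left nhdsWithin_le_nhds
  have ht : Tendsto (fun z : ℝ => lam - lam * z) (𝓝[<] 1) (𝓝[>] 0) := by
    refine tendsto_nhdsWithin_iff.2 ⟨?_, ?_⟩
    · have : Continuous fun z : ℝ => lam - lam * z := by fun_prop
      simpa using (this.tendsto 1).mono_left nhdsWithin_le_nhds
    · filter_upwards [self_mem_nhdsWithin] with z hz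
      have hz' : z < 1 := hz
      show 0 < lam - lam * z
      nlinarith
  have hq : Tendsto (fun z => h z / (1 - z)) (𝓝[<] 1)
      (𝓝 (lam * (1 + beta * ∫ x, x ∂ R))) := by
    have := ((((lapl_slope R hR hiR).comp ht).const_mul beta).const_add 1).const_mul lam
    refine this.congr' ?_
    filter_upwards [self_mem_nhdsWithin] with z hz
    have hz' : 1 - z ≠ 0 := (sub_pos.2 hz).ne'
    have e : lam - lam * z = lam * (1 - z) := by ring
    simp only [Function.comp, hh, e]
    field_simp
    ring
  have hpos : ∀ᶠ z in 𝓝[<] (1:ℝ), 0 < h z := by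
    filter_upwards [hq.eventually (lt_mem_nhds (show 0 < lam * (1 + beta * ∫ x, x ∂ R) by positivity)),
      self_mem_nhdsWithin] with z h1 hz
    exact (div_pos_iff_of_pos_right (sub_pos.2 hz)).1 h1
  have hh0 : Tendsto h (𝓝[<] 1) (𝓝[>] 0) := by
    refine tendsto_nhdsWithin_iff.2 ⟨?_, hpos⟩
    have := hq.mul hz0
    rw [mul_zero] at this
    refine this.congr' ?_
    filter_upwards [self_mem_nhdsWithin] with z hz
    exact div_mul_cancel₀ _ (sub_pos.2 hz).ne'
  have hA : Tendsto (fun z => (1 - δ z) / h z) (𝓝[<] 1) (𝓝 (∫ x, x ∂S)) := by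
    refine ((lapl_slope S hS hiS).comp hh0).congr fun z => ?_
    simp [hδ]
  refine ⟨hpos, hA, ?_⟩
  have := hA.mul hq
  rw [show lam * (∫ x, x ∂S) * (1 + beta * ∫ x, x ∂ R)
    = (∫ x, x ∂S) * (lam * (1 + beta * ∫ x, x ∂ R)) by ring]
  refine this.congr' ?_
  filter_upwards [hpos] with z hz
  exact div_mul_div_cancel₀ hz.ne'

/-- under the stability condition `λμ_{1,1}(1 + β₁γ_{1,1}) < 1`, the
ratio `[λ(1 − z) + α(1 − δ₂(z))](1 − δ₁(z)) / ((δ₁(z) − z)h₁(z))` tends, as `z → 1⁻`,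
to `μ_{1,1}(λ + αλμ_{2,1}(1 + β₂γ_{2,1}))/(1 − λμ_{1,1}(1 + β₁γ_{1,1}))`. -/
theorem incoming_factor_limit (lam alpha beta1 beta2 : ℝ)
    (hlam : 0 < lam) (halpha : 0 < alpha)
    (hbeta1 : 0 ≤ beta1) (hbeta2 : 0 ≤ beta2)
    (S1 R1 S2 R2 : Measure ℝ)
    [IsProbabilityMeasure S1] [IsProbabilityMeasure R1]
    [IsProbabilityMeasure S2] [IsProbabilityMeasure R2]
    (hS1 : S1 (Set.Iio 0) = 0) (hR1 : R1 (Set.Iio 0) = 0)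
    (hS2 : S2 (Set.Iio 0) = 0) (hR2 : R2 (Set.Iio 0) = 0)
    (hiS1 : Integrable (fun x => x) S1) (hiR1 : Integrable (fun x => x) R1)
    (hiS2 : Integrable (fun x => x) S2) (hiR2 : Integrable (fun x => x) R2)
    (mu11 gamma11 mu21 gamma21 : ℝ)
    (hmu11 : mu11 = ∫ x, x ∂S1) (hgamma11 : gamma11 = ∫ x, x ∂ R1)
    (hmu21 : mu21 = ∫ x, x ∂S2) (hgamma21 : gamma21 = ∫ x, x ∂ R2)
    (h1 h2 δ1 δ2 : ℝ → ℝ)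
    (hh1 : ∀ z, h1 z = lam + beta1 - lam * z - beta1 * lapl R1 (lam - lam * z))
    (hh2 : ∀ z, h2 z = lam + beta2 - lam * z - beta2 * lapl R2 (lam - lam * z))
    (hδ1 : ∀ z, δ1 z = lapl S1 (h1 z)) (hδ2 : ∀ z, δ2 z = lapl S2 (h2 z))
    (hstab : lam * mu11 * (1 + beta1 * gamma11) < 1) :
    Filter.Tendsto
      (fun z : ℝ =>
        (lam * (1 - z) + alpha * (1 - δ2 z)) * (1 - δ1 z) / ((δ1 z - z) * h1 z))
      (nhdsWithin 1 (Set.Iio 1))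
      (nhds (mu11 * (lam + alpha * (lam * mu21 * (1 + beta2 * gamma21))) /
             (1 - lam * mu11 * (1 + beta1 * gamma11)))) := by
  obtain ⟨hp, hA, hB⟩ := delta_limits lam beta1 hlam hbeta1 S1 R1 hS1 hR1 hiS1 hiR1 h1 δ1 hh1 hδ1
  obtain ⟨-, -, hC⟩ := delta_limits lam beta2 hlam hbeta2 S2 R2 hS2 hR2 hiS2 hiR2 h2 δ2 hh2 hδ2
  rw [← hmu11] at hA
  rw [← hmu11, ← hgamma11] at hB
  rw [← hmu21, ← hgamma21] at hC
  have hne : 1 - lam * mu11 * (1 + beta1 * gamma11) ≠ 0 := (sub_pos.2 hstab).ne'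
  have := (hA.mul ((hC.const_mul alpha).const_add lam)).div (hB.const_sub 1) hne
  refine this.congr' ?_
  filter_upwards [self_mem_nhdsWithin, hp] with z hz hpz
  have hz' : 1 - z ≠ 0 := (sub_pos.2 hz).ne'
  have e1 : 1 - (1 - δ1 z) / (1 - z) = (δ1 z - z) / (1 - z) := by
    field_simp
    ring
  have e2 : lam + alpha * ((1 - δ2 z) / (1 - z))
      = (lam * (1 - z) + alpha * (1 - δ2 z)) / (1 - z) := by
    field_simp
  simp only [Pi.div_apply]
  rw [e1, e2, mul_div_assoc', div_div_div_cancel_right₀ hz', div_mul_eq_mul_div, div_div]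
  congr 1 <;> ring
end

section
/- Under the stability condition ρ(1 + β₁γ_{1,1}) < 1, the steady-state server availability satisfies P_a = lim_{z→1⁻} (P₀(z) + P̃₁(z) + P̃₂(z)) = [(1 + σ)(1 − ρ(1 + β₁γ_{1,1})) + ρ(1 + σ(1 + β₂γ_{2,1}))] / (1 + σ(1 + β₂γ_{2,1})), where ρ = λμ_{1,1} and σ = αμ_{2,1}. -/
open MeasureTheory

open Filter Topology in
lemma lapl_aux (μ : Measure ℝ) [IsProbabilityMeasure μ] (h0 : μ (Set.Iio 0) = 0)
    (hi : Integrable (fun x => x) μ) :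
    Tendsto (fun θ => (1 - lapl μ θ) / θ) (𝓝[>] 0) (𝓝 (∫ x, x ∂μ)) := by
  have hae : ∀ᵐ x ∂μ, 0 ≤ x := by
    rw [ae_iff]
    convert h0 using 2
    ext x; simp
  have key : Tendsto (fun θ : ℝ => ∫ x, (1 - Real.exp (-θ * x)) / θ ∂μ) (𝓝[>] 0)
      (𝓝 (∫ x, x ∂μ)) := by
    apply tendsto_integral_filter_of_dominated_convergence (fun x => |x|)
    · exact Eventually.of_forall fun θ => by
        apply Continuous.aestronglyMeasurable
        fun_prop
    · filter_upwards [self_mem_nhdsWithin] with θ (hθ : 0 < θ)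
      filter_upwards [hae] with x hx
      have h1 : Real.exp (-θ * x) ≤ 1 := by
        apply Real.exp_le_one_iff.2; nlinarith [mul_nonneg hθ.le hx]
      have h2 := Real.add_one_le_exp (-θ * x)
      rw [Real.norm_eq_abs, abs_of_nonneg hx, abs_of_nonneg (div_nonneg (by linarith) hθ.le),
        div_le_iff₀ hθ]
      linarith
    · exact hi.abs
    · refine Eventually.of_forall fun x => ?_
      have hd : HasDerivAt (fun θ : ℝ => 1 - Real.exp (-θ * x)) x 0 := by
        have := (((hasDerivAt_id (0:ℝ)).neg.mul_const x).exp).const_sub 1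
        simpa using this
      have := hd.tendsto_slope_zero_right
      refine this.congr fun θ => ?_
      simp [div_eq_inv_mul]
  refine key.congr' ?_
  filter_upwards [self_mem_nhdsWithin] with θ (hθ : 0 < θ)
  have hInteg : Integrable (fun x => Real.exp (-θ * x)) μ := by
    apply Integrable.of_bound (C := 1)
    · apply Continuous.aestronglyMeasurable
      fun_prop
    · filter_upwards [hae] with x hx
      rw [Real.norm_eq_abs, Real.abs_exp]
      apply Real.exp_le_one_iff.2; nlinarith [mul_nonneg hθ.le hx]
  rw [integral_div, integral_sub (integrable_const _) hInteg]
  simp [lapl]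

open Filter Topology in
lemma mean_nonneg_aux (μ : Measure ℝ) (h0 : μ (Set.Iio 0) = 0) : 0 ≤ ∫ x, x ∂μ := by
  apply integral_nonneg_of_ae
  change ∀ᵐ x ∂μ, 0 ≤ x
  rw [ae_iff]
  convert h0 using 2
  ext x; simp

open Filter Topology in
lemma h_aux (lam beta : ℝ) (hlam : 0 < lam) (hbeta : 0 ≤ beta)
    (S R : Measure ℝ) [IsProbabilityMeasure S] [IsProbabilityMeasure R]
    (hS : S (Set.Iio 0) = 0) (hR : R (Set.Iio 0) = 0)
    (hiS : Integrable (fun x => x) S) (hiR : Integrable (fun x => x) R)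
    (h δ : ℝ → ℝ)
    (hh : ∀ z, h z = lam + beta - lam * z - beta * lapl R (lam - lam * z))
    (hδ : ∀ z, δ z = lapl S (h z)) :
    (∀ᶠ z in 𝓝[<] (1:ℝ), 0 < h z) ∧
    Tendsto (fun z => (1 - δ z) / h z) (𝓝[<] 1) (𝓝 (∫ x, x ∂S)) ∧
    Tendsto (fun z => (1 - δ z) / (1 - z)) (𝓝[<] 1)
      (𝓝 ((∫ x, x ∂S) * (lam * (1 + beta * ∫ x, x ∂ R)))) := by
  have hz0 : Tendsto (fun z : ℝ => 1 - z) (𝓝[<] 1) (𝓝 0) := by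
    have : Tendsto (fun z : ℝ => 1 - z) (𝓝 1) (𝓝 (1 - 1)) :=
      (continuous_const.sub continuous_id).tendsto 1
    rw [sub_self] at this
    exact this.mono_left nhdsWithin_le_nhds
  have hl : Tendsto (fun z : ℝ => lam - lam * z) (𝓝[<] 1) (𝓝[>] 0) := by
    apply tendsto_nhdsWithin_iff.2 ⟨?_, ?_⟩
    · have := hz0.const_mul lam
      rw [mul_zero] at this
      refine this.congr fun z => by ring
    · filter_upwards [self_mem_nhdsWithin] with z (hz : z < 1)
      simp only [Set.mem_Ioi]; nlinarith
  have hR' := (lapl_aux R hR hiR).comp hl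
  have hH : Tendsto (fun z => h z / (1 - z)) (𝓝[<] 1)
      (𝓝 (lam * (1 + beta * ∫ x, x ∂ R))) := by
    refine (((hR'.const_mul beta).const_add 1).const_mul lam).congr' ?_
    filter_upwards [self_mem_nhdsWithin] with z (hz : z < 1)
    have h1 : 1 - z ≠ 0 := by linarith
    have h2 : lam - lam * z = lam * (1 - z) := by ring
    have h3 := hlam.ne'
    simp only [Function.comp, hh]
    rw [h2]
    field_simp
    ring
  have hpos : 0 < lam * (1 + beta * ∫ x, x ∂ R) := by
    have := mul_nonneg hbeta (mean_nonneg_aux R hR)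
    positivity
  have hev : ∀ᶠ z in 𝓝[<] (1:ℝ), 0 < h z := by
    filter_upwards [hH.eventually (lt_mem_nhds hpos), self_mem_nhdsWithin] with z h1 (hz : z < 1)
    have h2 : 0 < 1 - z := by linarith
    exact (div_pos_iff_of_pos_right h2).1 h1
  have hh0 : Tendsto h (𝓝[<] 1) (𝓝[>] 0) := by
    apply tendsto_nhdsWithin_iff.2 ⟨?_, hev⟩
    have := hH.mul hz0
    rw [mul_zero] at this
    refine this.congr' ?_
    filter_upwards [self_mem_nhdsWithin] with z (hz : z < 1)
    have h1 : 1 - z ≠ 0 := by linarith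
    field_simp
  have hA : Tendsto (fun z => (1 - δ z) / h z) (𝓝[<] 1) (𝓝 (∫ x, x ∂S)) := by
    refine ((lapl_aux S hS hiS).comp hh0).congr fun z => ?_
    simp [hδ]
  refine ⟨hev, hA, ?_⟩
  refine (hA.mul hH).congr' ?_
  filter_upwards [hev, self_mem_nhdsWithin] with z h0 (hz : z < 1)
  have h1 : 1 - z ≠ 0 := by linarith
  have h2 := h0.ne'
  field_simp

/-- steady-state server availability
`P_a = lim_{z→1⁻} (P₀(z) + P̃₁(z) + P̃₂(z))
     = [(1 + σ)(1 − ρ(1 + β₁γ_{1,1})) + ρ(1 + σ(1 + β₂γ_{2,1}))] / (1 + σ(1 + β₂γ_{2,1}))`. -/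
theorem server_availability
    (lam alpha nu beta1 beta2 : ℝ)
    (hlam : 0 < lam) (halpha : 0 < alpha) (hnu : 0 < nu)
    (hbeta1 : 0 ≤ beta1) (hbeta2 : 0 ≤ beta2)
    (S1 R1 S2 R2 : Measure ℝ)
    [IsProbabilityMeasure S1] [IsProbabilityMeasure R1]
    [IsProbabilityMeasure S2] [IsProbabilityMeasure R2]
    (hS1 : S1 (Set.Iio 0) = 0) (hR1 : R1 (Set.Iio 0) = 0)
    (hS2 : S2 (Set.Iio 0) = 0) (hR2 : R2 (Set.Iio 0) = 0)
    (hiS1 : Integrable (fun x => x) S1) (hiR1 : Integrable (fun x => x) R1)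
    (hiS2 : Integrable (fun x => x) S2) (hiR2 : Integrable (fun x => x) R2)
    (mu11 gamma11 mu21 gamma21 : ℝ)
    (hmu11 : mu11 = ∫ x, x ∂S1) (hgamma11 : gamma11 = ∫ x, x ∂ R1)
    (hmu21 : mu21 = ∫ x, x ∂S2) (hgamma21 : gamma21 = ∫ x, x ∂ R2)
    (rho sigma : ℝ) (hrho : rho = lam * mu11) (hsigma : sigma = alpha * mu21)
    (h1 h2 δ1 δ2 g φ : ℝ → ℝ)
    (hh1 : ∀ z, h1 z = lam + beta1 - lam * z - beta1 * lapl R1 (lam - lam * z))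
    (hh2 : ∀ z, h2 z = lam + beta2 - lam * z - beta2 * lapl R2 (lam - lam * z))
    (hδ1 : ∀ z, δ1 z = lapl S1 (h1 z)) (hδ2 : ∀ z, δ2 z = lapl S2 (h2 z))
    (hg : ∀ u, g u = (lam * (1 - δ1 u) + alpha * (1 - δ2 u)) / (nu * (δ1 u - u)))
    (hφ : ∀ z, φ z = Real.exp (-(∫ u in z..1, g u)))
    (P0 : ℝ → ℝ)
    (hP0 : ∀ z, P0 z = ((1 - rho * (1 + beta1 * gamma11)) /
      (1 + sigma * (1 + beta2 * gamma21))) * φ z)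
    (P1 P2 : ℝ → ℝ)
    (hP1 : ∀ z, P1 z = (lam * (1 - z) + alpha * (1 - δ2 z)) * (1 - δ1 z) /
      ((δ1 z - z) * h1 z) * P0 z)
    (hP2 : ∀ z, P2 z = alpha * (1 - δ2 z) / h2 z * P0 z)
    (hstab : rho * (1 + beta1 * gamma11) < 1) :
    Filter.Tendsto (fun z : ℝ => P0 z + P1 z + P2 z) (nhdsWithin 1 (Set.Iio 1))
      (nhds (((1 + sigma) * (1 - rho * (1 + beta1 * gamma11)) +
        rho * (1 + sigma * (1 + beta2 * gamma21))) /
        (1 + sigma * (1 + beta2 * gamma21)))) := by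
  obtain ⟨he1, ha1, hb1⟩ := h_aux lam beta1 hlam hbeta1 S1 R1 hS1 hR1 hiS1 hiR1 h1 δ1 hh1 hδ1
  obtain ⟨he2, ha2, hb2⟩ := h_aux lam beta2 hlam hbeta2 S2 R2 hS2 hR2 hiS2 hiR2 h2 δ2 hh2 hδ2
  rw [← hmu11] at ha1
  rw [← hmu21] at ha2
  rw [← hmu11, ← hgamma11] at hb1
  rw [← hmu21, ← hgamma21] at hb2
  have hm2 : 0 ≤ mu21 := hmu21 ▸ mean_nonneg_aux S2 hS2
  have hg2 : 0 ≤ gamma21 := hgamma21 ▸ mean_nonneg_aux R2 hR2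
  have hD : 0 < 1 + sigma * (1 + beta2 * gamma21) := by
    rw [hsigma]; positivity
  have hr : 0 < 1 - rho * (1 + beta1 * gamma11) := by linarith
  have hc : Filter.Tendsto (fun z => (δ1 z - z) / (1 - z)) (nhdsWithin 1 (Set.Iio 1))
      (nhds (1 - rho * (1 + beta1 * gamma11))) := by
    have := hb1.const_sub 1
    rw [show 1 - rho * (1 + beta1 * gamma11) = 1 - mu11 * (lam * (1 + beta1 * gamma11)) by
      rw [hrho]; ring]
    refine this.congr' ?_
    filter_upwards [self_mem_nhdsWithin] with z (hz : z < 1)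
    have h1 : 1 - z ≠ 0 := by linarith
    field_simp
    ring
  have hgl : ∃ G, Filter.Tendsto g (nhdsWithin 1 (Set.Iio 1)) (nhds G) := by
    refine ⟨_, (((hb1.const_mul lam).add (hb2.const_mul alpha)).div (hc.const_mul nu)
      (by positivity)).congr' ?_⟩
    filter_upwards [self_mem_nhdsWithin, hc.eventually (lt_mem_nhds hr)] with z (hz : z < 1) hcz
    have h1 : 0 < 1 - z := by linarith
    have h2 := ((div_pos_iff_of_pos_right h1).1 hcz).ne'
    have h3 := h1.ne'
    rw [hg]
    simp only [Pi.div_apply]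
    field_simp
  have hInteg : Filter.Tendsto (fun z => ∫ u in z..1, g u) (nhdsWithin 1 (Set.Iio 1)) (nhds 0) := by
    obtain ⟨G, hG⟩ := hgl
    have hbd := hG.norm.eventually (gt_mem_nhds (lt_add_one ‖G‖))
    obtain ⟨a, ha, hIoo⟩ := (mem_nhdsLT_iff_exists_Ioo_subset).1 hbd
    have ha : a < 1 := ha
    have hlim : Filter.Tendsto (fun z : ℝ => (‖G‖ + 1) * (1 - z)) (nhdsWithin 1 (Set.Iio 1))
        (nhds 0) := by
      have : Continuous (fun z : ℝ => (‖G‖ + 1) * (1 - z)) := by fun_prop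
      have := (this.tendsto 1).mono_left (nhdsWithin_le_nhds (s := Set.Iio 1))
      simpa using this
    refine squeeze_zero_norm' ?_ hlim
    filter_upwards [Ioo_mem_nhdsLT ha] with z hz
    have := intervalIntegral.norm_integral_le_of_norm_le_const_ae (a := z) (b := 1) (f := g)
      (C := ‖G‖ + 1) ?_
    · rwa [abs_of_pos (by linarith [hz.2])] at this
    · have hne : ∀ᵐ u : ℝ, u ≠ 1 := by
        simp [ae_iff]
      filter_upwards [hne] with u hu1 hu
      rw [Set.uIoc_of_le hz.2.le] at hu
      exact (hIoo ⟨hz.1.trans hu.1, lt_of_le_of_ne hu.2 hu1⟩ : ‖g u‖ < ‖G‖ + 1).le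
  have hφl : Filter.Tendsto φ (nhdsWithin 1 (Set.Iio 1)) (nhds 1) := by
    have := (Real.continuous_exp.tendsto _).comp hInteg.neg
    simp only [neg_zero, Real.exp_zero] at this
    exact this.congr fun z => (hφ z).symm
  have hP0l : Filter.Tendsto P0 (nhdsWithin 1 (Set.Iio 1))
      (nhds ((1 - rho * (1 + beta1 * gamma11)) / (1 + sigma * (1 + beta2 * gamma21)))) := by
    have := hφl.const_mul ((1 - rho * (1 + beta1 * gamma11)) /
      (1 + sigma * (1 + beta2 * gamma21)))
    rw [mul_one] at this
    exact this.congr fun z => (hP0 z).symm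
  have hP1l : Filter.Tendsto P1 (nhdsWithin 1 (Set.Iio 1)) (nhds rho) := by
    have := ((((hb2.const_mul alpha).const_add lam).mul ha1).div hc hr.ne').mul hP0l
    have e : (lam + alpha * (mu21 * (lam * (1 + beta2 * gamma21)))) * mu11 /
        (1 - rho * (1 + beta1 * gamma11)) * ((1 - rho * (1 + beta1 * gamma11)) /
          (1 + sigma * (1 + beta2 * gamma21))) = rho := by
      have e1 : (lam + alpha * (mu21 * (lam * (1 + beta2 * gamma21)))) * mu11
          = rho * (1 + sigma * (1 + beta2 * gamma21)) := by
        rw [hrho, hsigma]; ring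
      rw [e1, div_mul_div_cancel₀ hr.ne', mul_div_cancel_right₀ _ hD.ne']
    rw [e] at this
    refine this.congr' ?_
    filter_upwards [self_mem_nhdsWithin, hc.eventually (lt_mem_nhds hr), he1]
      with z (hz : z < 1) hcz hez
    have h1 : 0 < 1 - z := by linarith
    have h2 := ((div_pos_iff_of_pos_right h1).1 hcz).ne'
    have h3 := h1.ne'
    have h4 := hez.ne'
    rw [hP1]
    simp only [Pi.div_apply]
    field_simp
  have hP2l : Filter.Tendsto P2 (nhdsWithin 1 (Set.Iio 1)) (nhds (sigma *
      ((1 - rho * (1 + beta1 * gamma11)) / (1 + sigma * (1 + beta2 * gamma21))))) := by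
    rw [hsigma] at hP0l ⊢
    refine ((ha2.const_mul alpha).mul hP0l).congr fun z => ?_
    rw [hP2, mul_div_assoc]
  convert (hP0l.add hP1l).add hP2l using 2
  field_simp
  ring
end
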